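/- Let L > 0, N ∈ ℕ with N ≥ 2, a := 1/N, m₁, m₂ > 0, and let φ : ℝ → ℝ be C⁶ with φ(α+1) = φ(α) − L, φ′(α) ≤ −m₁ < 0, and |φ^{(k)}(α)| ≤ m₂ for all α and 1 ≤ k ≤ 6. Then there is a constant C = C(m₁, m₂, L) such that for every grid index i₀ ∈ {1, …, N−1}, with α* := i₀/N, the principal-value integral PV∫₀¹ (π/L)·cot(π(φ(α*)−φ(β))/L) dβ exists and PV∫₀¹ (π/L)·cot(π(φ(α*)−φ(β))/L) dβ = Σ_{j=0, j≠i₀}^{N−1} a·(π/L)·cot(π(φ(α*)−φ(j/N))/L) + (a/2)·φ″(α*)/φ′(α*)² + R, with |R| ≤ C·a⁴. -/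

import Mathlib

open Real Filter Topology MeasureTheory

/-!
Near its singular point `x` the kernel `t ↦ (π / L) cot (π (φ x - φ t) / L)` behaves like
`-1 / (φ' x (t - x))`, and so does `w (t - x)` for the odd `1`-periodic function
`w t = -(φ' x)⁻¹ π cot (π t)`. Oddness and periodicity make both the principal value of `w (t - x)`
and its punctured sum over the grid vanish, so only the difference `g` of the two kernels matters.
It extends to a `1`-periodic `C⁴` function, for which the Riemann sum is accurate to fourth order;
the term of that sum missing from the punctured one is `N⁻¹ g x`, and expanding `g` at `x` gives
`g x = φ'' x / (2 (φ' x)²)`.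

The fourth derivative of `g` is bounded uniformly in `φ` because `(t - x) g t` is a combination of
fixed smooth functions evaluated at `t - x`, at `φ t - φ x` and at the divided difference of `φ`,
all of which stay in compact sets away from the singularities when `|t - x| ≤ 3 / 4`; dividing by
`t - x` again is a divided difference, at the cost of one derivative.
-/

section EulerMaclaurin

variable {g : ℝ → ℝ} {M : ℝ}

/-- For `q t = (t - a) ^ 2 * (b - t) ^ 2 / 24` the fourth derivative is `1`, so the derivative of
`q g''' - q' g'' + q'' g' - q''' g` is `q g'''' - g`; and `q`, `q'` vanish at both endpoints. -/
lemma integral_eq_corrected_trapezoid_add_integral (hg : ContDiff ℝ 4 g) (a b : ℝ) :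
    ∫ t in a..b, g t = (b - a) / 2 * (g a + g b) - (b - a) ^ 2 / 12 * (deriv g b - deriv g a)
      + ∫ t in a..b, (t - a) ^ 2 * (b - t) ^ 2 / 24 * iteratedDeriv 4 g t := by
  have h_deriv : ∀ k < 4, ∀ t, HasDerivAt (iteratedDeriv k g) (iteratedDeriv (k + 1) g t) t := by
    intro k hk t
    rw [iteratedDeriv_succ]
    exact (hg.differentiable_iteratedDeriv k (by exact_mod_cast hk) t).hasDerivAt
  have h_antideriv : ∀ t, HasDerivAt
      (fun t => (t - a) ^ 2 * (b - t) ^ 2 / 24 * iteratedDeriv 3 g t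
        - (t - a) * (b - t) * (a + b - 2 * t) / 12 * iteratedDeriv 2 g t
        + ((b - a) ^ 2 - 6 * ((t - a) * (b - t))) / 12 * iteratedDeriv 1 g t
        - (2 * t - a - b) / 2 * iteratedDeriv 0 g t)
      ((t - a) ^ 2 * (b - t) ^ 2 / 24 * iteratedDeriv 4 g t - g t) t := by
    intro t
    have ha := (hasDerivAt_id' t).sub_const a
    have hb := (hasDerivAt_id' t).const_sub b
    have h_two := (hasDerivAt_id' t).const_mul 2
    refine ((((((ha.pow 2).mul (hb.pow 2)).div_const 24).mul (h_deriv 3 (by norm_num) t)).sub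
      ((((ha.mul hb).mul (h_two.const_sub (a + b))).div_const 12).mul
        (h_deriv 2 (by norm_num) t))).add
      (((((ha.mul hb).const_mul 6).const_sub ((b - a) ^ 2)).div_const 12).mul
        (h_deriv 1 (by norm_num) t))).sub
      ((((h_two.sub_const a).sub_const b).div_const 2).mul (h_deriv 0 (by norm_num) t))
      |>.congr_deriv ?_
    simp only [iteratedDeriv_zero, Pi.mul_apply, Pi.pow_apply]
    ring
  have h_int : IntervalIntegrable
      (fun t => (t - a) ^ 2 * (b - t) ^ 2 / 24 * iteratedDeriv 4 g t) volume a b :=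
    ((by fun_prop : Continuous fun t => (t - a) ^ 2 * (b - t) ^ 2 / 24).mul
      (hg.continuous_iteratedDeriv 4 le_rfl)).intervalIntegrable a b
  have hg_int : IntervalIntegrable g volume a b := hg.continuous.intervalIntegrable a b
  have h_ftc := intervalIntegral.integral_eq_sub_of_hasDerivAt
    (fun t _ => h_antideriv t) (h_int.sub hg_int)
  rw [intervalIntegral.integral_sub h_int hg_int] at h_ftc
  simp only [iteratedDeriv_one, iteratedDeriv_zero] at h_ftc
  linear_combination -h_ftc

lemma abs_integral_sub_corrected_trapezoid_le (hg : ContDiff ℝ 4 g)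
    (hM : ∀ t, |iteratedDeriv 4 g t| ≤ M) {a b : ℝ} (hab : a ≤ b) :
    |(∫ t in a..b, g t)
        - ((b - a) / 2 * (g a + g b) - (b - a) ^ 2 / 12 * (deriv g b - deriv g a))|
      ≤ M / 384 * (b - a) ^ 5 := by
  rw [integral_eq_corrected_trapezoid_add_integral hg, add_sub_cancel_left]
  have h_weight_le : ∀ t ∈ Set.uIoc a b,
      ‖(t - a) ^ 2 * (b - t) ^ 2 / 24 * iteratedDeriv 4 g t‖ ≤ (b - a) ^ 4 / 384 * M := by
    intro t ht
    rw [Set.uIoc_of_le hab] at ht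
    have h_nonneg : 0 ≤ (t - a) * (b - t) :=
      mul_nonneg (sub_nonneg.mpr ht.1.le) (sub_nonneg.mpr ht.2)
    have h_amgm : (t - a) * (b - t) ≤ (b - a) ^ 2 / 4 := by nlinarith [sq_nonneg (2 * t - a - b)]
    have h_sq : ((t - a) * (b - t)) ^ 2 ≤ ((b - a) ^ 2 / 4) ^ 2 := by gcongr
    have h_weight : (t - a) ^ 2 * (b - t) ^ 2 / 24 ≤ (b - a) ^ 4 / 384 := by linarith
    rw [norm_mul, Real.norm_of_nonneg (by positivity)]
    exact mul_le_mul h_weight (hM t) (norm_nonneg _) (by positivity)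
  calc |∫ t in a..b, (t - a) ^ 2 * (b - t) ^ 2 / 24 * iteratedDeriv 4 g t|
      ≤ (b - a) ^ 4 / 384 * M * |b - a| :=
        intervalIntegral.norm_integral_le_of_norm_le_const h_weight_le
    _ = M / 384 * (b - a) ^ 5 := by
        rw [abs_of_nonneg (sub_nonneg.mpr hab)]
        ring

lemma abs_integral_sub_corrected_trapezoid_sum_le (hg : ContDiff ℝ 4 g)
    (hM : ∀ t, |iteratedDeriv 4 g t| ≤ M) {h : ℝ} (hh : 0 ≤ h) (a : ℝ) (n : ℕ) :
    |(∫ t in a..(a + n * h), g t)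
        - (∑ j ∈ Finset.range n, h * g (a + j * h) + h / 2 * (g (a + n * h) - g a)
          - h ^ 2 / 12 * (deriv g (a + n * h) - deriv g a))|
      ≤ M / 384 * (n * h ^ 5) := by
  induction n with
  | zero => simp
  | succ n ih =>
    set x := a + n * h with hx
    have hx_succ : a + (n + 1 : ℕ) * h = x + h := by push_cast; ring
    have h_cell := abs_integral_sub_corrected_trapezoid_le hg hM
      (le_add_of_nonneg_right hh : x ≤ x + h)
    rw [add_sub_cancel_left] at h_cell
    have h_split := intervalIntegral.integral_add_adjacent_intervals
      (hg.continuous.intervalIntegrable (μ := volume) a x)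
      (hg.continuous.intervalIntegrable x (x + h))
    rw [hx_succ, Finset.sum_range_succ, ← hx, ← h_split]
    refine (le_of_eq (congrArg abs ?_)).trans
      (((abs_add_le _ _).trans (add_le_add ih h_cell)).trans (le_of_eq ?_))
    · ring
    · push_cast
      ring

lemma abs_integral_sub_sum_le_of_periodic (hg : ContDiff ℝ 4 g)
    (hM : ∀ t, |iteratedDeriv 4 g t| ≤ M) (hg_per : Function.Periodic g 1) {N : ℕ} (hN : N ≠ 0) :
    |(∫ t in (0 : ℝ)..1, g t) - (N : ℝ)⁻¹ * ∑ j ∈ Finset.range N, g (j / N)|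
      ≤ M / 384 * (N : ℝ)⁻¹ ^ 4 := by
  have hN' : (N : ℝ) ≠ 0 := Nat.cast_ne_zero.mpr hN
  have hg_end : g 1 = g 0 := by simpa using hg_per 0
  have hg'_end : deriv g 1 = deriv g 0 := by
    have h := congrFun (congrArg deriv (funext hg_per)) 0
    rwa [deriv_comp_add_const, zero_add] at h
  have h := abs_integral_sub_corrected_trapezoid_sum_le hg hM (inv_nonneg.mpr N.cast_nonneg) 0 N
  simp only [zero_add, mul_inv_cancel₀ hN', hg_end, hg'_end, sub_self, mul_zero, add_zero,
    sub_zero, ← Finset.mul_sum, ← div_eq_mul_inv] at h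
  refine h.trans (le_of_eq ?_)
  field_simp

end EulerMaclaurin

section PrincipalValue

variable {f g : ℝ → ℝ} {a b x P Q T : ℝ}

/-- `P` is the principal value of the integral of `f` over `[a, b]` with singular point `x`: the
limit of the integrals over `[a, b]` with the symmetric neighbourhood `(x - δ, x + δ)` removed. -/
def HasPrincipalValue (f : ℝ → ℝ) (a x b P : ℝ) : Prop :=
  Tendsto (fun δ => (∫ t in a..(x - δ), f t) + ∫ t in (x + δ)..b, f t) (𝓝[>] 0) (𝓝 P)

lemma eventually_truncation_subset (hx : x ∈ Set.Ioo a b) :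
    ∀ᶠ δ in 𝓝[>] (0 : ℝ), Set.uIcc a (x - δ) ⊆ Set.Icc a b \ {x} ∧
      Set.uIcc (x + δ) b ⊆ Set.Icc a b \ {x} := by
  have h_room : 0 < min (x - a) (b - x) := lt_min (sub_pos.mpr hx.1) (sub_pos.mpr hx.2)
  filter_upwards [Ioo_mem_nhdsGT h_room] with δ hδ
  have h_left : δ < x - a := hδ.2.trans_le (min_le_left _ _)
  have h_right : δ < b - x := hδ.2.trans_le (min_le_right _ _)
  have hδ_pos : 0 < δ := hδ.1
  rw [Set.uIcc_of_le (by linarith), Set.uIcc_of_le (by linarith)]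
  refine ⟨fun t ht => ⟨⟨ht.1, ?_⟩, ?_⟩, fun t ht => ⟨⟨?_, ht.2⟩, ?_⟩⟩
  · linarith [ht.2]
  · exact (show t < x by linarith [ht.2]).ne
  · linarith [ht.1]
  · exact (show x < t by linarith [ht.1]).ne'

lemma HasPrincipalValue.congr (hf : HasPrincipalValue f a x b P) (hx : x ∈ Set.Ioo a b)
    (hfg : Set.EqOn f g (Set.Icc a b \ {x})) : HasPrincipalValue g a x b P := by
  refine Tendsto.congr' ?_ hf
  filter_upwards [eventually_truncation_subset hx] with δ hδ
  rw [intervalIntegral.integral_congr (hfg.mono hδ.1),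
    intervalIntegral.integral_congr (hfg.mono hδ.2)]

lemma HasPrincipalValue.add (hf : HasPrincipalValue f a x b P) (hg : HasPrincipalValue g a x b Q)
    (hx : x ∈ Set.Ioo a b) (hf_cont : ContinuousOn f (Set.Icc a b \ {x}))
    (hg_cont : ContinuousOn g (Set.Icc a b \ {x})) :
    HasPrincipalValue (fun t => f t + g t) a x b (P + Q) := by
  refine Tendsto.congr' ?_ (Tendsto.add hf hg)
  filter_upwards [eventually_truncation_subset hx] with δ hδ
  rw [intervalIntegral.integral_add (hf_cont.mono hδ.1).intervalIntegrable
      (hg_cont.mono hδ.1).intervalIntegrable,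
    intervalIntegral.integral_add (hf_cont.mono hδ.2).intervalIntegrable
      (hg_cont.mono hδ.2).intervalIntegrable]
  ring

lemma hasPrincipalValue_of_continuous (hf : Continuous f) (a x b : ℝ) :
    HasPrincipalValue f a x b (∫ t in a..b, f t) := by
  have h_int : ∀ u v, IntervalIntegrable f volume u v := fun u v => hf.intervalIntegrable u v
  have h_primitive : Continuous fun u => ∫ t in a..u, f t :=
    intervalIntegral.continuous_primitive h_int a
  have h_trunc : ∀ δ, (∫ t in a..(x - δ), f t) + ∫ t in (x + δ)..b, f t
      = (∫ t in a..(x - δ), f t) + ((∫ t in a..b, f t) - ∫ t in a..(x + δ), f t) := fun δ => by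
    rw [intervalIntegral.integral_interval_sub_left (h_int _ _) (h_int _ _)]
  have h_cont : Continuous fun δ => (∫ t in a..(x - δ), f t)
      + ((∫ t in a..b, f t) - ∫ t in a..(x + δ), f t) :=
    (h_primitive.comp (continuous_const.sub continuous_id)).add
      (continuous_const.sub (h_primitive.comp (continuous_const.add continuous_id)))
  simp only [HasPrincipalValue, h_trunc]
  refine (h_cont.tendsto' 0 _ ?_).mono_left nhdsWithin_le_nhds
  rw [sub_zero, add_zero, add_sub_cancel]

lemma integral_eq_zero_of_odd_of_periodic (hf : Function.Odd f) (hf_per : Function.Periodic f T)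
    (δ : ℝ) : ∫ t in δ..(T - δ), f t = 0 := by
  have h_reflect : ∫ t in δ..(T - δ), f (T - t) = ∫ t in δ..(T - δ), f t := by
    rw [intervalIntegral.integral_comp_sub_left f T, sub_sub_cancel]
  have h_neg : ∀ t, f (T - t) = -f t := fun t => by rw [← neg_sub, hf, hf_per.sub_eq]
  simp only [h_neg, intervalIntegral.integral_neg] at h_reflect
  linarith

lemma hasPrincipalValue_comp_sub_of_odd_of_periodic (hf : Function.Odd f)
    (hf_per : Function.Periodic f T) (hf_cont : ContinuousOn f (Set.Ioo 0 T))
    (hx : x ∈ Set.Ioo 0 T) : HasPrincipalValue (fun t => f (t - x)) 0 x T 0 := by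
  refine tendsto_const_nhds.congr' ?_
  filter_upwards [Ioo_mem_nhdsGT hx.1] with δ hδ
  have h_int : ∀ u ∈ Set.Ioo 0 T, ∀ v ∈ Set.Ioo 0 T, IntervalIntegrable f volume u v :=
    fun u hu v hv => (hf_cont.mono (Set.ordConnected_Ioo.uIcc_subset hu hv)).intervalIntegrable
  have hδ_mem : δ ∈ Set.Ioo 0 T := ⟨hδ.1, hδ.2.trans hx.2⟩
  have hx_mem : T - x ∈ Set.Ioo 0 T := ⟨sub_pos.mpr hx.2, sub_lt_self T hx.1⟩
  have hδ_mem' : T - δ ∈ Set.Ioo 0 T := ⟨sub_pos.mpr hδ_mem.2, sub_lt_self T hδ.1⟩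
  have h_shift : ∫ t in (0 : ℝ)..(x - δ), f (t - x) = ∫ t in (T - x)..(T - δ), f t := by
    have h_per : ∀ t, f (t - x) = f (t + (T - x)) := fun t => by
      rw [← hf_per (t - x), sub_add_eq_add_sub, add_sub_assoc]
    simp only [h_per, intervalIntegral.integral_comp_add_right]
    congr 1 <;> ring
  rw [h_shift, intervalIntegral.integral_comp_sub_right f x, add_sub_cancel_left, add_comm,
    intervalIntegral.integral_add_adjacent_intervals (h_int _ hδ_mem _ hx_mem)
      (h_int _ hx_mem _ hδ_mem'), integral_eq_zero_of_odd_of_periodic hf hf_per]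

end PrincipalValue

section PeriodicSum

variable {G : Type*} [AddCommGroup G] {F : ℤ → G} {N : ℕ}

lemma sum_range_add_one_of_periodic (hF : Function.Periodic F N) :
    ∑ j ∈ Finset.range N, F (j + 1) = ∑ j ∈ Finset.range N, F j := by
  have h_tail := Finset.sum_range_succ' (fun j : ℕ => F j) N
  rw [Finset.sum_range_succ, ← zero_add (N : ℤ), hF 0] at h_tail
  exact_mod_cast (add_right_cancel h_tail).symm

lemma sum_range_sub_of_periodic (hF : Function.Periodic F N) (i : ℕ) :
    ∑ j ∈ Finset.range N, F (j - i) = ∑ j ∈ Finset.range N, F j := by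
  induction i with
  | zero => simp
  | succ i ih =>
    have h_shift := sum_range_add_one_of_periodic (hF.sub_const (i + 1 : ℤ))
    rw [← ih]
    simpa using h_shift.symm

lemma sum_range_eq_zero_of_odd_of_periodic [IsAddTorsionFree G] (hF : Function.Odd F)
    (hF_per : Function.Periodic F N) : ∑ j ∈ Finset.range N, F j = 0 := by
  have h_reflect : ∀ j ∈ Finset.range N, F ((N - 1 - j : ℕ) : ℤ) = -F (j + 1) := by
    intro j hj
    have h_cast : ((N - 1 - j : ℕ) : ℤ) = -((j : ℤ) + 1) + N := by
      have := Finset.mem_range.mp hj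
      omega
    rw [h_cast, hF_per, hF]
  have h_neg : ∑ j ∈ Finset.range N, F j = -∑ j ∈ Finset.range N, F j := by
    nth_rewrite 1 [← Finset.sum_range_reflect (fun j : ℕ => F j) N]
    rw [Finset.sum_congr rfl h_reflect, Finset.sum_neg_distrib,
      sum_range_add_one_of_periodic hF_per]
  exact self_eq_neg.mp h_neg

end PeriodicSum

lemma sum_range_div_sub_div_eq_zero {f : ℝ → ℝ} (hf : Function.Odd f)
    (hf_per : Function.Periodic f 1) (N i : ℕ) :
    ∑ j ∈ Finset.range N, f (j / N - i / N) = 0 := by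
  rcases eq_or_ne N 0 with rfl | hN
  · simp
  have hN' : (N : ℝ) ≠ 0 := Nat.cast_ne_zero.mpr hN
  set F : ℤ → ℝ := fun j => f (j / N) with hF
  have hF_odd : Function.Odd F := fun j => by simp only [hF, Int.cast_neg, neg_div, hf _]
  have hF_per : Function.Periodic F N := fun j => by
    simp only [hF, Int.cast_add, Int.cast_natCast, add_div, div_self hN', hf_per _]
  have h_zero := (sum_range_sub_of_periodic hF_per i).trans
    (sum_range_eq_zero_of_odd_of_periodic hF_odd hF_per)
  simpa only [hF, Int.cast_sub, Int.cast_natCast, sub_div] using h_zero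

section SingularQuadrature

variable {K w g : ℝ → ℝ} {x : ℝ}

lemma hasPrincipalValue_of_eq_odd_add (hw : Function.Odd w) (hw_per : Function.Periodic w 1)
    (hw_cont : ∀ t, t ≠ 0 → |t| < 1 → ContinuousAt w t) (hg : Continuous g)
    (hx : x ∈ Set.Ioo 0 1) (hK : ∀ t, t ≠ x → |t - x| < 1 → K t = w (t - x) + g t) :
    HasPrincipalValue K 0 x 1 (∫ t in (0 : ℝ)..1, g t) := by
  have h_dist : ∀ t ∈ Set.Icc (0 : ℝ) 1, |t - x| < 1 := fun t ht =>
    abs_lt.mpr ⟨by linarith [ht.1, hx.2], by linarith [ht.2, hx.1]⟩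
  have hw_Ioo : ContinuousOn w (Set.Ioo 0 1) := fun t ht =>
    (hw_cont t ht.1.ne' (abs_lt.mpr ⟨by linarith [ht.1], ht.2⟩)).continuousWithinAt
  have hw_shift : ContinuousOn (fun t => w (t - x)) (Set.Icc 0 1 \ {x}) := fun t ht =>
    (ContinuousAt.comp (f := fun t => t - x)
      (hw_cont (t - x) (sub_ne_zero.mpr ht.2) (h_dist t ht.1))
      (continuous_sub_right x).continuousAt).continuousWithinAt
  have h_add := (hasPrincipalValue_comp_sub_of_odd_of_periodic hw hw_per hw_Ioo hx).add
    (hasPrincipalValue_of_continuous hg 0 x 1) hx hw_shift hg.continuousOn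
  rw [zero_add] at h_add
  exact h_add.congr hx fun t ht => (hK t ht.2 (h_dist t ht.1)).symm

lemma sum_erase_add_eq_sum_of_eq_odd_add (hw : Function.Odd w) (hw_per : Function.Periodic w 1)
    {N i : ℕ} (hi : i < N)
    (hK : ∀ t, t ≠ (i / N : ℝ) → |t - i / N| < 1 → K t = w (t - i / N) + g t) :
    ∑ j ∈ (Finset.range N).erase i, K (j / N) + g (i / N) = ∑ j ∈ Finset.range N, g (j / N) := by
  have hN : (0 : ℝ) < N := by exact_mod_cast i.zero_le.trans_lt hi
  have hi_mem : i ∈ Finset.range N := Finset.mem_range.mpr hi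
  have h_dist : ∀ j ∈ Finset.range N, |(j / N : ℝ) - i / N| < 1 := by
    intro j hj
    have hj' : (j : ℝ) < N := by exact_mod_cast Finset.mem_range.mp hj
    have hi' : (i : ℝ) < N := by exact_mod_cast hi
    rw [← sub_div, abs_div, abs_of_pos hN, div_lt_one hN, abs_lt]
    constructor <;> linarith [j.cast_nonneg (α := ℝ), i.cast_nonneg (α := ℝ)]
  have h_split : ∀ j ∈ (Finset.range N).erase i,
      K (j / N) = w (j / N - i / N) + g (j / N) := by
    intro j hj
    obtain ⟨hji, hj⟩ := Finset.mem_erase.mp hj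
    refine hK _ (fun h => hji ?_) (h_dist j hj)
    exact_mod_cast (div_left_inj' hN.ne').mp h
  have hw_sum : ∑ j ∈ (Finset.range N).erase i, w (j / N - i / N) = 0 := by
    rw [← sum_range_div_sub_div_eq_zero hw hw_per N i, ← Finset.sum_erase_add _ _ hi_mem,
      sub_self, hw.map_zero, add_zero]
  rw [Finset.sum_congr rfl h_split, Finset.sum_add_distrib, hw_sum, zero_add,
    Finset.sum_erase_add _ _ hi_mem]

end SingularQuadrature

section SegmentAverage

variable {E : Type*} [NormedAddCommGroup E] [NormedSpace ℝ E] {f : ℝ → E} {a : ℝ}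

/-- The average of `f` over the segment from `a` to `t`, with weight `s ^ k` in the affine
parameter `s`. Differentiating in `t` raises the weight by one, which makes these averages
convenient representatives of divided differences and their derivatives. -/
noncomputable def segmentAverage (k : ℕ) (f : ℝ → E) (a t : ℝ) : E :=
  ∫ s in (0 : ℝ)..1, s ^ k • f (a + s * (t - a))

lemma continuous_segmentAverage (hf : Continuous f) (k : ℕ) :
    Continuous (segmentAverage k f a) :=
  intervalIntegral.continuous_parametric_intervalIntegral_of_continuous' (by fun_prop) _ _

lemma norm_pow_smul_le_of_mem_uIoc {s B : ℝ} (hs : s ∈ Set.uIoc (0 : ℝ) 1) (k : ℕ) {x : E}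
    (hx : ‖x‖ ≤ B) : ‖s ^ k • x‖ ≤ B := by
  rw [Set.uIoc_of_le zero_le_one] at hs
  rw [norm_smul, norm_pow, Real.norm_of_nonneg hs.1.le]
  exact (mul_le_of_le_one_left (norm_nonneg x) (pow_le_one₀ hs.1.le hs.2)).trans hx

lemma norm_segmentAverage_le {B : ℝ} (hf : ∀ t, ‖f t‖ ≤ B) (k : ℕ) (t : ℝ) :
    ‖segmentAverage k f a t‖ ≤ B := by
  simpa [segmentAverage] using intervalIntegral.norm_integral_le_of_norm_le_const
    fun s hs => norm_pow_smul_le_of_mem_uIoc hs k (hf (a + s * (t - a)))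

lemma hasDerivAt_segmentAverage (hf : ContDiff ℝ 1 f) (k : ℕ) (t : ℝ) :
    HasDerivAt (segmentAverage k f a) (segmentAverage (k + 1) (deriv f) a t) t := by
  have hf_cont : Continuous f := hf.continuous
  have hf'_cont : Continuous (deriv f) := hf.continuous_deriv le_rfl
  obtain ⟨B, hB⟩ := (isCompact_closedBall a (|t - a| + 1)).exists_bound_of_continuousOn
    hf'_cont.continuousOn
  have h_point_mem : ∀ s ∈ Set.uIoc (0 : ℝ) 1, ∀ x ∈ Metric.ball t 1,
      a + s * (x - a) ∈ Metric.closedBall a (|t - a| + 1) := by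
    intro s hs x hx
    rw [Set.uIoc_of_le zero_le_one] at hs
    rw [Metric.mem_ball, Real.dist_eq] at hx
    rw [Metric.mem_closedBall, Real.dist_eq, add_sub_cancel_left, abs_mul, abs_of_pos hs.1]
    calc s * |x - a| ≤ |x - a| := mul_le_of_le_one_left (abs_nonneg _) hs.2
      _ ≤ |t - a| + 1 := by linarith [abs_sub_le x t a]
  refine (intervalIntegral.hasDerivAt_integral_of_dominated_loc_of_deriv_le
    (F := fun x s => s ^ k • f (a + s * (x - a)))
    (F' := fun x s => s ^ (k + 1) • deriv f (a + s * (x - a)))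
    (bound := fun _ => B) (Metric.ball_mem_nhds t one_pos)
    (Eventually.of_forall fun x => ?_) ?_ ?_ (Eventually.of_forall fun s hs x hx => ?_) (by simp)
    (Eventually.of_forall fun s _ x _ => ?_)).2
  · exact (by fun_prop : Continuous _).aestronglyMeasurable
  · exact (by fun_prop : Continuous _).intervalIntegrable _ _
  · exact (by fun_prop : Continuous _).aestronglyMeasurable
  · exact norm_pow_smul_le_of_mem_uIoc hs (k + 1) (hB _ (h_point_mem s hs x hx))
  · have h_inner : HasDerivAt (fun x => a + s * (x - a)) s x := by
      simpa using (((hasDerivAt_id x).sub_const a).const_mul s).const_add a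
    have h_outer := (hf.differentiable one_ne_zero (a + s * (x - a))).hasDerivAt
    rw [pow_succ, mul_smul]
    exact (h_outer.scomp x h_inner).const_smul (s ^ k)

lemma deriv_segmentAverage (hf : ContDiff ℝ 1 f) (k : ℕ) :
    deriv (segmentAverage k f a) = segmentAverage (k + 1) (deriv f) a :=
  funext fun t => (hasDerivAt_segmentAverage hf k t).deriv

lemma contDiff_segmentAverage {n : ℕ} (hf : ContDiff ℝ n f) (k : ℕ) :
    ContDiff ℝ n (segmentAverage k f a) := by
  induction n generalizing k f with
  | zero =>
    rw [Nat.cast_zero, contDiff_zero] at hf ⊢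
    exact continuous_segmentAverage hf k
  | succ n ih =>
    rw [Nat.cast_succ] at hf ⊢
    have hf_one : ContDiff ℝ 1 f := hf.of_le le_add_self
    refine contDiff_succ_iff_deriv.mpr
      ⟨fun t => (hasDerivAt_segmentAverage hf_one k t).differentiableAt, by simp, ?_⟩
    rw [deriv_segmentAverage hf_one]
    exact ih (contDiff_succ_iff_deriv.mp hf).2.2 (k + 1)

lemma iteratedDeriv_segmentAverage {n : ℕ} (hf : ContDiff ℝ n f) (k : ℕ) :
    iteratedDeriv n (segmentAverage k f a) = segmentAverage (k + n) (iteratedDeriv n f) a := by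
  induction n generalizing k f with
  | zero => simp
  | succ n ih =>
    rw [Nat.cast_succ] at hf
    rw [iteratedDeriv_succ', iteratedDeriv_succ', deriv_segmentAverage (hf.of_le le_add_self),
      ih (contDiff_succ_iff_deriv.mp hf).2.2, Nat.add_right_comm, add_assoc]

variable [CompleteSpace E]

lemma segmentAverage_self (k : ℕ) : segmentAverage k f a a = ((k : ℝ) + 1)⁻¹ • f a := by
  simp [segmentAverage, intervalIntegral.integral_smul_const, integral_pow]

lemma dslope_eq_segmentAverage (hf : ContDiff ℝ 1 f) :
    dslope f a = segmentAverage 0 (deriv f) a := by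
  funext t
  rcases eq_or_ne t a with rfl | hta
  · simp [segmentAverage_self]
  · have h_ftc : (t - a) • segmentAverage 0 (deriv f) a t = f t - f a := by
      have h_subst := intervalIntegral.smul_integral_comp_add_mul (a := 0) (b := 1)
        (deriv f) (t - a) a
      simp only [mul_zero, add_zero, mul_one, add_sub_cancel] at h_subst
      simp only [segmentAverage, pow_zero, one_smul, mul_comm _ (t - a), h_subst]
      exact intervalIntegral.integral_deriv_eq_sub
        (fun x _ => hf.differentiable one_ne_zero x)
        ((hf.continuous_deriv le_rfl).intervalIntegrable _ _)
    rw [← sub_smul_dslope f a t] at h_ftc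
    exact (smul_right_injective E (sub_ne_zero.mpr hta) h_ftc).symm

lemma contDiff_dslope {n : ℕ} (hf : ContDiff ℝ (n + 1) f) : ContDiff ℝ n (dslope f a) := by
  rw [dslope_eq_segmentAverage (hf.of_le le_add_self)]
  exact contDiff_segmentAverage (contDiff_succ_iff_deriv.mp hf).2.2 0

lemma iteratedDeriv_dslope {n : ℕ} (hf : ContDiff ℝ (n + 1) f) :
    iteratedDeriv n (dslope f a) = segmentAverage n (iteratedDeriv (n + 1) f) a := by
  rw [dslope_eq_segmentAverage (hf.of_le le_add_self),
    iteratedDeriv_segmentAverage (contDiff_succ_iff_deriv.mp hf).2.2, zero_add,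
    iteratedDeriv_succ']

lemma norm_iteratedDeriv_dslope_le {n : ℕ} {B : ℝ} (hf : ContDiff ℝ (n + 1) f)
    (hB : ∀ t, ‖iteratedDeriv (n + 1) f t‖ ≤ B) (t : ℝ) :
    ‖iteratedDeriv n (dslope f a) t‖ ≤ B := by
  rw [iteratedDeriv_dslope hf]
  exact norm_segmentAverage_le hB n t

lemma deriv_dslope_self (hf : ContDiff ℝ 2 f) :
    deriv (dslope f a) a = (2 : ℝ)⁻¹ • iteratedDeriv 2 f a := by
  rw [← iteratedDeriv_one, iteratedDeriv_dslope (by exact_mod_cast hf), segmentAverage_self]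
  norm_num

end SegmentAverage

lemma dslope_mem_Icc {f : ℝ → ℝ} {a m M : ℝ} (hf : Differentiable ℝ f)
    (hf' : ∀ t, deriv f t ∈ Set.Icc m M) (t : ℝ) : dslope f a t ∈ Set.Icc m M := by
  rcases lt_trichotomy t a with hlt | rfl | hgt
  · obtain ⟨c, -, hc⟩ :=
      exists_deriv_eq_slope f hlt hf.continuous.continuousOn hf.differentiableOn
    rw [dslope_of_ne f hlt.ne, slope_comm, slope_def_field, ← hc]
    exact hf' c
  · rw [dslope_same]
    exact hf' t
  · obtain ⟨c, -, hc⟩ :=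
      exists_deriv_eq_slope f hgt hf.continuous.continuousOn hf.differentiableOn
    rw [dslope_of_ne f hgt.ne', slope_def_field, ← hc]
    exact hf' c

/-- The function `f` is `C^n` on the whole line and its derivatives of order `0, …, n` are all
bounded by the single constant `B`. -/
structure HasBoundedDerivs (n : ℕ) (B : ℝ) (f : ℝ → ℝ) : Prop where
  contDiff : ContDiff ℝ n f
  norm_iteratedDeriv_le : ∀ k ≤ n, ∀ t, ‖iteratedDeriv k f t‖ ≤ B

namespace HasBoundedDerivs

variable {n : ℕ} {A B : ℝ} {f g : ℝ → ℝ}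

lemma bound_nonneg (hf : HasBoundedDerivs n B f) : 0 ≤ B :=
  (norm_nonneg _).trans (hf.norm_iteratedDeriv_le 0 n.zero_le 0)

lemma mono (hf : HasBoundedDerivs n A f) (hAB : A ≤ B) : HasBoundedDerivs n B f :=
  ⟨hf.contDiff, fun k hk t => (hf.norm_iteratedDeriv_le k hk t).trans hAB⟩

lemma comp_sub_const (hf : HasBoundedDerivs n B f) (c : ℝ) :
    HasBoundedDerivs n B fun t => f (t - c) := by
  refine ⟨hf.contDiff.comp (contDiff_id.sub contDiff_const), fun k hk t => ?_⟩
  rw [iteratedDeriv_comp_sub_const]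
  exact hf.norm_iteratedDeriv_le k hk (t - c)

lemma const_mul (hf : HasBoundedDerivs n B f) (c : ℝ) :
    HasBoundedDerivs n (‖c‖ * B) fun t => c * f t := by
  refine ⟨contDiff_const.mul hf.contDiff, fun k hk t => ?_⟩
  rw [iteratedDeriv_const_mul c (hf.contDiff.of_le (by exact_mod_cast hk)).contDiffAt, norm_mul]
  gcongr
  exact hf.norm_iteratedDeriv_le k hk t

lemma sub (hf : HasBoundedDerivs n A f) (hg : HasBoundedDerivs n B g) :
    HasBoundedDerivs n (A + B) fun t => f t - g t := by
  refine ⟨hf.contDiff.sub hg.contDiff, fun k hk t => ?_⟩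
  have hkn : (k : WithTop ℕ∞) ≤ n := by exact_mod_cast hk
  rw [iteratedDeriv_fun_sub (hf.contDiff.of_le hkn).contDiffAt
    (hg.contDiff.of_le hkn).contDiffAt]
  exact (norm_sub_le _ _).trans
    (add_le_add (hf.norm_iteratedDeriv_le k hk t) (hg.norm_iteratedDeriv_le k hk t))

lemma mul (hf : HasBoundedDerivs n A f) (hg : HasBoundedDerivs n B g) :
    HasBoundedDerivs n (2 ^ n * (A * B)) fun t => f t * g t := by
  have hA := hf.bound_nonneg
  have hB := hg.bound_nonneg
  refine ⟨hf.contDiff.mul hg.contDiff, fun k hk t => ?_⟩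
  have h_leibniz :=
    norm_iteratedFDeriv_mul_le hf.contDiff hg.contDiff t (n := k) (by exact_mod_cast hk)
  simp only [norm_iteratedFDeriv_eq_norm_iteratedDeriv] at h_leibniz
  calc ‖iteratedDeriv k (fun t => f t * g t) t‖
      ≤ ∑ i ∈ Finset.range (k + 1),
          (k.choose i : ℝ) * ‖iteratedDeriv i f t‖ * ‖iteratedDeriv (k - i) g t‖ := h_leibniz
    _ ≤ ∑ i ∈ Finset.range (k + 1), (k.choose i : ℝ) * A * B := by
        gcongr with i hi
        · exact hf.norm_iteratedDeriv_le i (by rw [Finset.mem_range] at hi; omega) t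
        · exact hg.norm_iteratedDeriv_le (k - i) (by omega) t
    _ = 2 ^ k * (A * B) := by
        rw [← Finset.sum_mul, ← Finset.sum_mul, mul_assoc, ← Nat.cast_sum,
          Nat.sum_range_choose, Nat.cast_pow, Nat.cast_ofNat]
    _ ≤ 2 ^ n * (A * B) := by
        gcongr
        exact one_le_two

lemma comp {D : ℝ} (hg : HasBoundedDerivs n B g) (hf : ContDiff ℝ n f) (hD : 1 ≤ D)
    (hf_le : ∀ k, 1 ≤ k → k ≤ n → ∀ t, ‖iteratedDeriv k f t‖ ≤ D) :
    HasBoundedDerivs n (n.factorial * B * D ^ n) fun t => g (f t) := by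
  have hB := hg.bound_nonneg
  refine ⟨hg.contDiff.comp hf, fun k hk t => ?_⟩
  have h_faa := norm_iteratedFDeriv_comp_le hg.contDiff hf (n := k) (by exact_mod_cast hk) t
    (C := B) (D := D)
    (fun i hi => by
      rw [norm_iteratedFDeriv_eq_norm_iteratedDeriv]
      exact hg.norm_iteratedDeriv_le i (hi.trans hk) _)
    (fun i hi hik => by
      rw [norm_iteratedFDeriv_eq_norm_iteratedDeriv]
      exact (hf_le i hi (hik.trans hk) t).trans (le_self_pow₀ hD (by omega)))
  rw [norm_iteratedFDeriv_eq_norm_iteratedDeriv] at h_faa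
  refine h_faa.trans ?_
  gcongr

lemma of_hasCompactSupport (hf : ContDiff ℝ n f) (hf_supp : HasCompactSupport f) :
    ∃ B, HasBoundedDerivs n B f := by
  have h_each : ∀ k ≤ n, ∃ B, ∀ t, ‖iteratedDeriv k f t‖ ≤ B := by
    intro k hk
    obtain ⟨B, hB⟩ := (hf_supp.iteratedFDeriv (𝕜 := ℝ) k).exists_bound_of_continuous
      (hf.continuous_iteratedFDeriv (by exact_mod_cast hk))
    refine ⟨B, fun t => ?_⟩
    rw [← norm_iteratedFDeriv_eq_norm_iteratedDeriv]
    exact hB t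
  choose! B hB using h_each
  refine ⟨∑ k ∈ Finset.range (n + 1), |B k|, hf, fun k hk t => ?_⟩
  calc ‖iteratedDeriv k f t‖ ≤ |B k| := (hB k hk t).trans (le_abs_self _)
    _ ≤ ∑ k ∈ Finset.range (n + 1), |B k| :=
        Finset.single_le_sum (f := fun k => |B k|) (fun _ _ => abs_nonneg _)
          (Finset.mem_range.mpr (Nat.lt_succ_of_le hk))

lemma exists_eventuallyEq_nhdsSet {K U : Set ℝ} (hK : IsCompact K) (hU : IsOpen U)
    (hKU : K ⊆ U) (hf : ContDiffOn ℝ n f U) :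
    ∃ p B, HasBoundedDerivs n B p ∧ p =ᶠ[𝓝ˢ K] f := by
  obtain ⟨K', hK', hKK', hK'U⟩ := exists_compact_between hK hU hKU
  obtain ⟨b, hb_one, hb_zero, -⟩ := exists_contMDiffMap_one_nhds_of_subset_interior
    (n := n) (modelWithCornersSelf ℝ ℝ) hK.isClosed hKK'
  have h_supp : HasCompactSupport fun t => b t * f t :=
    (HasCompactSupport.intro hK' hb_zero).mul_right
  have h_contDiff : ContDiff ℝ n fun t => b t * f t := by
    rw [contDiff_iff_contDiffAt]
    intro t
    by_cases ht : t ∈ K'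
    · exact b.contMDiff.contDiff.contDiffAt.mul (hf.contDiffAt (hU.mem_nhds (hK'U ht)))
    · have h_zero : (fun t => b t * f t) =ᶠ[𝓝 t] fun _ => 0 := by
        filter_upwards [hK'.isClosed.isOpen_compl.mem_nhds ht] with s hs
        rw [hb_zero s hs, zero_mul]
      exact contDiffAt_const.congr_of_eventuallyEq h_zero
  obtain ⟨B, hB⟩ := of_hasCompactSupport h_contDiff h_supp
  refine ⟨_, B, hB, ?_⟩
  filter_upwards [hb_one] with t ht
  rw [ht, one_mul]

lemma exists_comp_eventuallyEq {K U : Set ℝ} {D : ℝ} (hK : IsCompact K) (hU : IsOpen U)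
    (hKU : K ⊆ U) (hg : ContDiffOn ℝ n g U) (hD : 1 ≤ D) :
    ∃ B, ∀ f : ℝ → ℝ, ContDiff ℝ n f →
      (∀ k, 1 ≤ k → k ≤ n → ∀ t, ‖iteratedDeriv k f t‖ ≤ D) →
      ∃ p, HasBoundedDerivs n B p ∧ ∀ t, f t ∈ K → p =ᶠ[𝓝 t] fun u => g (f u) := by
  obtain ⟨p, B, hp, hpg⟩ := exists_eventuallyEq_nhdsSet hK hU hKU hg
  refine ⟨n.factorial * B * D ^ n, fun f hf hf_le => ⟨fun u => p (f u), hp.comp hf hD hf_le, ?_⟩⟩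
  intro t ht
  exact hf.continuous.continuousAt.eventually (eventually_nhdsSet_iff_forall.mp hpg _ ht)

end HasBoundedDerivs

section CotangentKernel

variable {L y : ℝ}

/-- The `L`-periodic cotangent kernel, normalised so that its residue at `0` is `1`. -/
noncomputable def cotKernel (L y : ℝ) : ℝ := π / L * cot (π * y / L)

/-- The product `y * cotKernel L y`, continued by the value `1` to the removable singularity
`y = 0`. -/
noncomputable def regularizedCot (L y : ℝ) : ℝ := cos (π * y / L) / sinc (π * y / L)

lemma cotKernel_odd (L : ℝ) : Function.Odd (cotKernel L) := fun y => by
  simp only [cotKernel, cot_eq_cos_div_sin, mul_neg, neg_div, cos_neg, sin_neg, div_neg]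

lemma cotKernel_periodic (hL : L ≠ 0) : Function.Periodic (cotKernel L) L := fun y => by
  have h_arg : π * (y + L) / L = π * y / L + π := by field_simp
  simp only [cotKernel, cot_eq_cos_div_sin, h_arg, cos_add_pi, sin_add_pi, neg_div_neg_eq]

lemma mul_cotKernel (hL : L ≠ 0) (hy : y ≠ 0) : y * cotKernel L y = regularizedCot L y := by
  have h_arg : π * y / L ≠ 0 := div_ne_zero (mul_ne_zero pi_ne_zero hy) hL
  rw [cotKernel, regularizedCot, cot_eq_cos_div_sin, sinc_of_ne_zero h_arg]
  field_simp

lemma regularizedCot_zero (L : ℝ) : regularizedCot L 0 = 1 := by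
  simp [regularizedCot]

lemma regularizedCot_even (L : ℝ) : Function.Even (regularizedCot L) := fun y => by
  simp only [regularizedCot, mul_neg, neg_div, cos_neg, sinc_neg]

lemma sinc_pos_of_abs_lt_pi {x : ℝ} (hx : |x| < π) : 0 < sinc x := by
  rcases eq_or_ne x 0 with rfl | hx_ne
  · simp
  · have h_abs : sinc |x| = sinc x := by
      rcases abs_choice x with h | h <;> rw [h]
      exact sinc_neg x
    rw [← h_abs, sinc_of_ne_zero (abs_ne_zero.mpr hx_ne)]
    exact div_pos (sin_pos_of_pos_of_lt_pi (abs_pos.mpr hx_ne) hx) (abs_pos.mpr hx_ne)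

lemma contDiff_sinc {n : ℕ} : ContDiff ℝ n sinc := by
  rw [sinc_eq_dslope]
  exact contDiff_dslope contDiff_sin

lemma contDiffAt_regularizedCot {n : ℕ} (hy : |y| < L) : ContDiffAt ℝ n (regularizedCot L) y := by
  have hL : 0 < L := (abs_nonneg y).trans_lt hy
  have h_arg_lt : |π * y / L| < π := by
    rw [abs_div, abs_mul, abs_of_pos pi_pos, abs_of_pos hL, div_lt_iff₀ hL]
    exact mul_lt_mul_of_pos_left hy pi_pos
  have h_arg : ContDiffAt ℝ n (fun y => π * y / L) y := by fun_prop
  exact h_arg.cos.div (contDiff_sinc.contDiffAt.comp y h_arg)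
    (sinc_pos_of_abs_lt_pi h_arg_lt).ne'

lemma contDiffOn_regularizedCot (n : ℕ) (L : ℝ) :
    ContDiffOn ℝ n (regularizedCot L) (Metric.ball 0 L) := fun _ hy =>
  (contDiffAt_regularizedCot (mem_ball_zero_iff.mp hy)).contDiffWithinAt

lemma deriv_zero_of_even {E : Type*} [NormedAddCommGroup E] [NormedSpace ℝ E] {f : ℝ → E}
    (hf : Function.Even f) : deriv f 0 = 0 := by
  have h := deriv_comp_neg f 0
  rw [funext hf, neg_zero] at h
  have h_two : (2 : ℝ) • deriv f 0 = 0 := by rw [two_smul, ← sub_neg_eq_add, ← h, sub_self]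
  exact (smul_eq_zero.mp h_two).resolve_left two_ne_zero

lemma hasDerivAt_regularizedCot_zero (hL : 0 < L) : HasDerivAt (regularizedCot L) 0 0 := by
  have h_diff : DifferentiableAt ℝ (regularizedCot L) 0 :=
    (contDiffAt_regularizedCot (n := 1) (by rwa [abs_zero])).differentiableAt one_ne_zero
  simpa only [deriv_zero_of_even (regularizedCot_even L)] using h_diff.hasDerivAt

lemma continuousAt_cotKernel (hy : y ≠ 0) (hyL : |y| < L) : ContinuousAt (cotKernel L) y := by
  have hL : L ≠ 0 := ((abs_nonneg y).trans_lt hyL).ne'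
  have h_quot : ContinuousAt (fun y => regularizedCot L y / y) y :=
    (contDiffAt_regularizedCot (n := 0) hyL).continuousAt.div continuousAt_id hy
  refine h_quot.congr ?_
  filter_upwards [isOpen_ne.mem_nhds hy] with z hz
  rw [← mul_cotKernel hL hz, mul_div_cancel_left₀ _ hz]

end CotangentKernel

section FillLattice

variable {E : Type*} {f g₀ : ℝ → E} {a r : ℝ}

open scoped Classical in
/-- The function `f` with its values on the lattice `a + ℤ` replaced by `c`: the continuation of a
`1`-periodic function with removable singularities on that lattice. -/
noncomputable def fillLattice (f : ℝ → E) (a : ℝ) (c : E) (t : ℝ) : E :=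
  if ∃ k : ℤ, t - a = k then c else f t

lemma fillLattice_self (c : E) : fillLattice f a c a = c :=
  if_pos ⟨0, by simp⟩

lemma fillLattice_of_abs_lt_one (c : E) {t : ℝ} (hta : t ≠ a) (ht : |t - a| < 1) :
    fillLattice f a c t = f t := by
  refine if_neg ?_
  rintro ⟨k, hk⟩
  rw [hk] at ht
  have hk_zero : k = 0 := Int.abs_lt_one_iff.mp (by exact_mod_cast ht)
  rw [hk_zero, Int.cast_zero, sub_eq_zero] at hk
  exact hta hk

lemma fillLattice_periodic (hf : Function.Periodic f 1) (c : E) :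
    Function.Periodic (fillLattice f a c) 1 := fun t => by
  have h_shift : (∃ k : ℤ, t + 1 - a = k) ↔ ∃ k : ℤ, t - a = k :=
    ⟨fun ⟨k, hk⟩ => ⟨k - 1, by push_cast; linarith⟩,
      fun ⟨k, hk⟩ => ⟨k + 1, by push_cast; linarith⟩⟩
  classical exact if_congr h_shift rfl (hf t)

lemma fillLattice_eq_of_abs_sub_lt (hf : Function.Periodic f 1)
    (hfg₀ : ∀ t, t ≠ a → |t - a| ≤ r → f t = g₀ t) {k : ℤ} {t : ℝ}
    (ht : |t - k - a| < min r 1) : fillLattice f a (g₀ a) t = g₀ (t - k) := by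
  have h_translate : fillLattice f a (g₀ a) t = fillLattice f a (g₀ a) (t - k) := by
    rw [← mul_one (k : ℝ), (fillLattice_periodic hf _).sub_int_mul_eq]
  rcases eq_or_ne (t - k) a with h_eq | h_ne
  · rw [h_translate, h_eq, fillLattice_self]
  · rw [h_translate, fillLattice_of_abs_lt_one _ h_ne (ht.trans_le (min_le_right _ _))]
    exact hfg₀ _ h_ne (ht.le.trans (min_le_left _ _))

/-- The integer translates of `(a - r, a + r)` cover the line. -/
lemma exists_fillLattice_eventuallyEq (hf : Function.Periodic f 1) (hr : 1 / 2 < r)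
    (hfg₀ : ∀ t, t ≠ a → |t - a| ≤ r → f t = g₀ t) (t : ℝ) :
    ∃ k : ℤ, fillLattice f a (g₀ a) =ᶠ[𝓝 t] fun u => g₀ (u - k) := by
  refine ⟨round (t - a), ?_⟩
  have ht : |t - round (t - a) - a| < min r 1 := by
    rw [sub_right_comm]
    exact (abs_sub_round _).trans_lt (lt_min hr one_half_lt_one)
  have h_open : IsOpen {u : ℝ | |u - round (t - a) - a| < min r 1} :=
    isOpen_lt (by fun_prop) continuous_const
  exact eventually_of_mem (h_open.mem_nhds ht) fun u hu => fillLattice_eq_of_abs_sub_lt hf hfg₀ hu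

variable [NormedAddCommGroup E] [NormedSpace ℝ E] {n : ℕ}

lemma contDiff_fillLattice (hf : Function.Periodic f 1) (hr : 1 / 2 < r)
    (hfg₀ : ∀ t, t ≠ a → |t - a| ≤ r → f t = g₀ t) (hg₀ : ContDiff ℝ n g₀) :
    ContDiff ℝ n (fillLattice f a (g₀ a)) := by
  refine contDiff_iff_contDiffAt.mpr fun t => ?_
  obtain ⟨k, hk⟩ := exists_fillLattice_eventuallyEq hf hr hfg₀ t
  exact (hg₀.comp (contDiff_id.sub contDiff_const)).contDiffAt.congr_of_eventuallyEq hk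

lemma norm_iteratedDeriv_fillLattice_le {M : ℝ} (hf : Function.Periodic f 1) (hr : 1 / 2 < r)
    (hfg₀ : ∀ t, t ≠ a → |t - a| ≤ r → f t = g₀ t) (hM : ∀ t, ‖iteratedDeriv n g₀ t‖ ≤ M)
    (t : ℝ) : ‖iteratedDeriv n (fillLattice f a (g₀ a)) t‖ ≤ M := by
  obtain ⟨k, hk⟩ := exists_fillLattice_eventuallyEq hf hr hfg₀ t
  rw [hk.iteratedDeriv_eq, iteratedDeriv_comp_sub_const]
  exact hM _

end FillLattice

/-- The admissible step-location functions `φ`: `C⁶`, decreasing with slope at most `-m₁`, moving by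
`-L` over a unit interval, with derivatives of order `1, …, 6` bounded by `m₂`. -/
structure IsStepProfile (L m₁ m₂ : ℝ) (φ : ℝ → ℝ) : Prop where
  contDiff : ContDiff ℝ 6 φ
  map_add_one : ∀ α, φ (α + 1) = φ α - L
  deriv_le : ∀ α, deriv φ α ≤ -m₁
  abs_iteratedDeriv_le : ∀ k, 1 ≤ k → k ≤ 6 → ∀ α, |iteratedDeriv k φ α| ≤ m₂

/-- The numerator of the regular part of the kernel at the singular point `x`: the sum
`cotKernel L (φ x - φ t) + (deriv φ x)⁻¹ * cotKernel 1 (t - x)`, whose poles at `t = x` cancel,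
multiplied by `t - x`. -/
noncomputable def kernelNumerator (L : ℝ) (φ : ℝ → ℝ) (x t : ℝ) : ℝ :=
  (deriv φ x)⁻¹ * regularizedCot 1 (t - x) - regularizedCot L (φ t - φ x) * (dslope φ x t)⁻¹

section KernelNumerator

variable {L x t : ℝ} {φ : ℝ → ℝ}

lemma sub_mul_cotKernel_add (hL : L ≠ 0) (htx : t ≠ x) (hφ : φ t ≠ φ x) :
    (t - x) * (cotKernel L (φ x - φ t) + (deriv φ x)⁻¹ * cotKernel 1 (t - x)) =
      kernelNumerator L φ x t := by
  have h_slope : (t - x) * dslope φ x t = φ t - φ x := sub_smul_dslope φ x t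
  have h_slope_ne : dslope φ x t ≠ 0 := fun h =>
    sub_ne_zero.mpr hφ (by rw [← h_slope, h, mul_zero])
  have h_singular : (t - x) * cotKernel L (φ x - φ t)
      = -(regularizedCot L (φ t - φ x) * (dslope φ x t)⁻¹) := by
    rw [← neg_sub (φ t), cotKernel_odd L, ← mul_cotKernel hL (sub_ne_zero.mpr hφ), ← h_slope]
    field_simp
  rw [kernelNumerator, ← mul_cotKernel one_ne_zero (sub_ne_zero.mpr htx)]
  linear_combination h_singular

lemma kernelNumerator_self : kernelNumerator L φ x x = 0 := by
  simp [kernelNumerator, regularizedCot_zero]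

lemma hasDerivAt_kernelNumerator_self (hL : 0 < L) (hφ : ContDiff ℝ 2 φ) (hφ' : deriv φ x ≠ 0) :
    HasDerivAt (kernelNumerator L φ x) (iteratedDeriv 2 φ x / 2 / deriv φ x ^ 2) x := by
  have h_unit : HasDerivAt (fun t => regularizedCot 1 (t - x)) (0 * 1) x :=
    (hasDerivAt_regularizedCot_zero one_pos).comp_of_eq x ((hasDerivAt_id' x).sub_const x)
      (sub_self x).symm
  have h_outer : HasDerivAt (fun t => regularizedCot L (φ t - φ x)) (0 * deriv φ x) x :=
    (hasDerivAt_regularizedCot_zero hL).comp_of_eq x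
      ((hφ.differentiable two_ne_zero x).hasDerivAt.sub_const (φ x)) (sub_self (φ x)).symm
  have h_slope : HasDerivAt (dslope φ x) (iteratedDeriv 2 φ x / 2) x := by
    have h_diff : DifferentiableAt ℝ (dslope φ x) x :=
      (contDiff_dslope (n := 1) (by exact_mod_cast hφ)).differentiable one_ne_zero x
    refine h_diff.hasDerivAt.congr_deriv ?_
    rw [deriv_dslope_self hφ, smul_eq_mul, div_eq_inv_mul]
  have h_slope_inv := h_slope.inv (by rwa [dslope_same])
  refine ((h_unit.const_mul (deriv φ x)⁻¹).sub (h_outer.mul h_slope_inv)).congr_deriv ?_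
  simp only [sub_self, regularizedCot_zero, dslope_same]
  ring

end KernelNumerator

namespace IsStepProfile

variable {L m₁ m₂ : ℝ} {φ : ℝ → ℝ}

lemma differentiable (hφ : IsStepProfile L m₁ m₂ φ) : Differentiable ℝ φ :=
  hφ.contDiff.differentiable (by norm_num)

lemma deriv_mem_Icc (hφ : IsStepProfile L m₁ m₂ φ) (t : ℝ) :
    deriv φ t ∈ Set.Icc (-m₂) (-m₁) := by
  have h_abs := hφ.abs_iteratedDeriv_le 1 le_rfl (by norm_num) t
  rw [iteratedDeriv_one] at h_abs
  exact ⟨(abs_le.mp h_abs).1, hφ.deriv_le t⟩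

lemma strictAnti (hφ : IsStepProfile L m₁ m₂ φ) (hm₁ : 0 < m₁) : StrictAnti φ :=
  strictAnti_of_deriv_neg fun t => (hφ.deriv_le t).trans_lt (neg_neg_of_pos hm₁)

lemma cotKernel_periodic (hφ : IsStepProfile L m₁ m₂ φ) (hL : L ≠ 0) (y : ℝ) :
    Function.Periodic (fun t => cotKernel L (y - φ t)) 1 := fun t => by
  have h_arg : y - φ (t + 1) = y - φ t + L := by rw [hφ.map_add_one]; ring
  simp only [h_arg, _root_.cotKernel_periodic hL _]

/-- Over the rest of the period, `φ` still decreases by at least `m₁ * (1 - r)`. -/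
lemma abs_sub_le (hφ : IsStepProfile L m₁ m₂ φ) (hm₁ : 0 < m₁) {r s t : ℝ} (hr : r < 1)
    (hst : |t - s| ≤ r) : |φ t - φ s| ≤ L - m₁ * (1 - r) := by
  wlog h_le : s ≤ t generalizing s t
  · rw [abs_sub_comm] at hst ⊢
    exact this hst (le_of_not_ge h_le)
  rw [abs_of_nonneg (sub_nonneg.mpr h_le)] at hst
  rw [abs_of_nonpos (sub_nonpos.mpr ((hφ.strictAnti hm₁).antitone h_le))]
  have h_rest := image_sub_le_mul_sub_of_deriv_le hφ.differentiable hφ.deriv_le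
    (by linarith : t ≤ s + 1)
  rw [hφ.map_add_one] at h_rest
  nlinarith

lemma norm_iteratedDeriv_sub_const_le (hφ : IsStepProfile L m₁ m₂ φ) (y : ℝ) {k : ℕ} (hk : 1 ≤ k)
    (hk6 : k ≤ 6) (t : ℝ) : ‖iteratedDeriv k (fun t => φ t - y) t‖ ≤ m₂ := by
  obtain ⟨k, rfl⟩ := Nat.exists_eq_succ_of_ne_zero (Nat.one_le_iff_ne_zero.mp hk)
  rw [Nat.succ_eq_add_one, iteratedDeriv_succ', deriv_sub_const_fun, ← iteratedDeriv_succ']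
  exact hφ.abs_iteratedDeriv_le (k + 1) hk hk6 t

lemma norm_iteratedDeriv_dslope_le (hφ : IsStepProfile L m₁ m₂ φ) (x : ℝ) {k : ℕ} (hk : k ≤ 5)
    (t : ℝ) : ‖iteratedDeriv k (dslope φ x) t‖ ≤ m₂ :=
  _root_.norm_iteratedDeriv_dslope_le
    (hφ.contDiff.of_le (by exact_mod_cast Nat.succ_le_succ hk))
    (hφ.abs_iteratedDeriv_le (k + 1) (Nat.le_add_left 1 k) (Nat.succ_le_succ hk)) t

lemma norm_inv_deriv_le (hφ : IsStepProfile L m₁ m₂ φ) (hm₁ : 0 < m₁) (x : ℝ) :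
    ‖(deriv φ x)⁻¹‖ ≤ m₁⁻¹ := by
  rw [norm_inv]
  refine inv_anti₀ hm₁ ?_
  rw [Real.norm_eq_abs]
  exact (le_neg_of_le_neg (hφ.deriv_le x)).trans (neg_le_abs _)

lemma exists_hasBoundedDerivs_kernelNumerator (L m₂ : ℝ) (hm₁ : 0 < m₁) {r : ℝ} (hr : r < 1) :
    ∃ C, ∀ φ, IsStepProfile L m₁ m₂ φ → ∀ x, ∃ F, HasBoundedDerivs 5 C F ∧
      ∀ t, |t - x| ≤ r → F =ᶠ[𝓝 t] kernelNumerator L φ x := by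
  have h_slope_range : Set.Icc (-m₂) (-m₁) ⊆ {0}ᶜ := fun y hy => by
    simpa using (hy.2.trans_lt (neg_neg_of_pos hm₁)).ne
  have h_gap : L - m₁ * (1 - r) < L := sub_lt_self L (mul_pos hm₁ (sub_pos.mpr hr))
  obtain ⟨u, Bu, hu, hu_eq⟩ := HasBoundedDerivs.exists_eventuallyEq_nhdsSet
    (isCompact_closedBall 0 r) Metric.isOpen_ball (Metric.closedBall_subset_ball hr)
    (contDiffOn_regularizedCot 5 1)
  obtain ⟨Bp, hBp⟩ := HasBoundedDerivs.exists_comp_eventuallyEq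
    (isCompact_closedBall 0 (L - m₁ * (1 - r))) Metric.isOpen_ball
    (Metric.closedBall_subset_ball h_gap) (contDiffOn_regularizedCot 5 L) (le_max_left 1 m₂)
  obtain ⟨Bq, hBq⟩ := HasBoundedDerivs.exists_comp_eventuallyEq isCompact_Icc
    isOpen_compl_singleton h_slope_range (contDiffOn_inv ℝ) (le_max_left 1 m₂)
  refine ⟨m₁⁻¹ * Bu + 2 ^ 5 * (Bp * Bq), fun φ hφ x => ?_⟩
  obtain ⟨p, hp, hp_eq⟩ := hBp (fun t => φ t - φ x)
    ((hφ.contDiff.of_le (by norm_num)).sub contDiff_const) fun k hk hk5 t =>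
      (hφ.norm_iteratedDeriv_sub_const_le _ hk (by omega) t).trans (le_max_right 1 m₂)
  obtain ⟨q, hq, hq_eq⟩ := hBq (dslope φ x) (contDiff_dslope hφ.contDiff) fun k _ hk5 t =>
    (hφ.norm_iteratedDeriv_dslope_le x hk5 t).trans (le_max_right 1 m₂)
  refine ⟨fun t => (deriv φ x)⁻¹ * u (t - x) - p t * q t,
    (((hu.comp_sub_const x).const_mul _).sub (hp.mul hq)).mono ?_, fun t ht => ?_⟩
  · have hBu := hu.bound_nonneg
    gcongr
    exact hφ.norm_inv_deriv_le hm₁ x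
  · have hu_near : ∀ᶠ s in 𝓝 t, u (s - x) = regularizedCot 1 (s - x) :=
      (continuous_sub_right x).continuousAt.eventually
        (eventually_nhdsSet_iff_forall.mp hu_eq _ (mem_closedBall_zero_iff.mpr ht))
    filter_upwards [hu_near, hp_eq t (mem_closedBall_zero_iff.mpr (hφ.abs_sub_le hm₁ hr ht)),
      hq_eq t (dslope_mem_Icc hφ.differentiable hφ.deriv_mem_Icc t)] with s hus hps hqs
    rw [kernelNumerator, hus, hps, hqs]

lemma exists_local_regularPart (hL : 0 < L) (hm₁ : 0 < m₁) (m₂ : ℝ) {r : ℝ} (hr₀ : 0 ≤ r)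
    (hr : r < 1) :
    ∃ C, ∀ φ, IsStepProfile L m₁ m₂ φ → ∀ x, ∃ g₀ : ℝ → ℝ, ContDiff ℝ (4 : ℕ) g₀ ∧
      (∀ t, ‖iteratedDeriv 4 g₀ t‖ ≤ C) ∧ g₀ x = iteratedDeriv 2 φ x / 2 / deriv φ x ^ 2 ∧
      ∀ t, t ≠ x → |t - x| ≤ r →
        cotKernel L (φ x - φ t) + (deriv φ x)⁻¹ * cotKernel 1 (t - x) = g₀ t := by
  obtain ⟨C, hC⟩ := exists_hasBoundedDerivs_kernelNumerator L m₂ hm₁ hr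
  refine ⟨C, fun φ hφ x => ?_⟩
  obtain ⟨F, hF, hF_eq⟩ := hC φ hφ x
  have hF_near : F =ᶠ[𝓝 x] kernelNumerator L φ x := hF_eq x (by rwa [sub_self, abs_zero])
  have hφ' : deriv φ x ≠ 0 := ((hφ.deriv_le x).trans_lt (neg_neg_of_pos hm₁)).ne
  refine ⟨dslope F x, contDiff_dslope hF.contDiff, fun t => ?_, ?_, fun t htx ht => ?_⟩
  · exact _root_.norm_iteratedDeriv_dslope_le hF.contDiff (hF.norm_iteratedDeriv_le 5 le_rfl) t
  · rw [dslope_same, hF_near.deriv_eq]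
    exact (hasDerivAt_kernelNumerator_self hL (hφ.contDiff.of_le (by norm_num)) hφ').deriv
  · have h_numerator := sub_mul_cotKernel_add hL.ne' htx ((hφ.strictAnti hm₁).injective.ne htx)
    rw [← (hF_eq t ht).eq_of_nhds, ← sub_zero (F t), ← kernelNumerator_self (L := L) (φ := φ),
      ← hF_near.eq_of_nhds, ← sub_smul_dslope F x t, smul_eq_mul] at h_numerator
    exact mul_left_cancel₀ (sub_ne_zero.mpr htx) h_numerator

lemma exists_periodic_regularPart (hL : 0 < L) (hm₁ : 0 < m₁) (m₂ : ℝ) :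
    ∃ M, ∀ φ, IsStepProfile L m₁ m₂ φ → ∀ x, ∃ g : ℝ → ℝ, ContDiff ℝ 4 g ∧
      (∀ t, |iteratedDeriv 4 g t| ≤ M) ∧ Function.Periodic g 1 ∧
      g x = iteratedDeriv 2 φ x / 2 / deriv φ x ^ 2 ∧
      ∀ t, t ≠ x → |t - x| < 1 →
        cotKernel L (φ x - φ t) = -(deriv φ x)⁻¹ * cotKernel 1 (t - x) + g t := by
  have hr : (1 / 2 : ℝ) < 3 / 4 := by norm_num
  obtain ⟨M, hM⟩ := exists_local_regularPart hL hm₁ m₂ (by norm_num : (0 : ℝ) ≤ 3 / 4) (by norm_num)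
  refine ⟨M, fun φ hφ x => ?_⟩
  obtain ⟨g₀, hg₀, hg₀_le, hg₀_self, hg₀_eq⟩ := hM φ hφ x
  set K : ℝ → ℝ := fun t => cotKernel L (φ x - φ t) + (deriv φ x)⁻¹ * cotKernel 1 (t - x)
  have hK : Function.Periodic K 1 := (hφ.cotKernel_periodic hL.ne' (φ x)).add fun t => by
    rw [add_sub_right_comm, _root_.cotKernel_periodic one_ne_zero]
  refine ⟨fillLattice K x (g₀ x), contDiff_fillLattice hK hr hg₀_eq hg₀,
    norm_iteratedDeriv_fillLattice_le hK hr hg₀_eq hg₀_le, fillLattice_periodic hK _,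
    (fillLattice_self _).trans hg₀_self, fun t htx ht => ?_⟩
  rw [fillLattice_of_abs_lt_one _ htx ht]
  ring

end IsStepProfile

/-- Euler–Maclaurin-type quadrature for the singular cotangent kernel:
for `C⁶` step-location functions `φ` with `φ(α+1) = φ(α) − L`, `φ′ ≤ −m₁ < 0`,
`|φ^{(k)}| ≤ m₂` (`1 ≤ k ≤ 6`), and any interior grid point `α* = i₀/N`, the principal-value
integral `PV∫₀¹ (π/L)cot(π(φ(α*)−φ(β))/L) dβ` exists and equals the punctured Riemann sum plus
the correction `(a/2)φ″(α*)/φ′(α*)²` up to an error of size `C·a⁴`, with `C = C(m₁,m₂,L)`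
independent of `N` and `i₀`. -/
theorem stmt_12 (L m₁ m₂ : ℝ) (hL : 0 < L) (hm₁ : 0 < m₁) (hm₂ : 0 < m₂) :
    ∃ C : ℝ, 0 < C ∧
      ∀ N : ℕ, 2 ≤ N →
        ∀ φ : ℝ → ℝ, ContDiff ℝ 6 φ →
          (∀ α : ℝ, φ (α + 1) = φ α - L) →
          (∀ α : ℝ, deriv φ α ≤ -m₁) →
          (∀ k : ℕ, 1 ≤ k → k ≤ 6 → ∀ α : ℝ, |iteratedDeriv k φ α| ≤ m₂) →
          ∀ i₀ : ℕ, 1 ≤ i₀ → i₀ ≤ N - 1 →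
            ∃ P R : ℝ,
              Tendsto (fun δ : ℝ =>
                  (∫ β in (0:ℝ)..((i₀:ℝ)/(N:ℝ) - δ),
                    (π / L) * Real.cot (π * (φ ((i₀:ℝ)/(N:ℝ)) - φ β) / L))
                  + ∫ β in ((i₀:ℝ)/(N:ℝ) + δ)..1,
                    (π / L) * Real.cot (π * (φ ((i₀:ℝ)/(N:ℝ)) - φ β) / L))
                (𝓝[>] (0:ℝ)) (𝓝 P) ∧
              P = (∑ j ∈ (Finset.range N).erase i₀,
                    (N:ℝ)⁻¹ * (π / L) * Real.cot (π * (φ ((i₀:ℝ)/(N:ℝ)) - φ ((j:ℝ)/(N:ℝ))) / L))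
                  + ((N:ℝ)⁻¹ / 2) * iteratedDeriv 2 φ ((i₀:ℝ)/(N:ℝ))
                      / (deriv φ ((i₀:ℝ)/(N:ℝ))) ^ 2
                  + R ∧
              |R| ≤ C * (N:ℝ)⁻¹ ^ 4 := by
  obtain ⟨M, hM⟩ := IsStepProfile.exists_periodic_regularPart hL hm₁ m₂
  refine ⟨max (M / 384) 1, by positivity, fun N _ φ hφ h_step h_deriv h_bound i₀ hi₀ hi₀N => ?_⟩
  have hi₀_lt : i₀ < N := by omega
  have hx : (i₀ / N : ℝ) ∈ Set.Ioo 0 1 := by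
    have hN : (0 : ℝ) < N := by exact_mod_cast i₀.zero_le.trans_lt hi₀_lt
    exact ⟨div_pos (by exact_mod_cast hi₀) hN, (div_lt_one hN).mpr (by exact_mod_cast hi₀_lt)⟩
  obtain ⟨g, hg, hg_le, hg_per, hg_self, hg_eq⟩ :=
    hM φ ⟨hφ, h_step, h_deriv, h_bound⟩ (i₀ / N)
  set c : ℝ := -(deriv φ (i₀ / N))⁻¹
  have hw_odd : Function.Odd (c • cotKernel 1) := (cotKernel_odd 1).const_smul c
  have hw_per : Function.Periodic (c • cotKernel 1) 1 := (cotKernel_periodic one_ne_zero).smul c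
  refine ⟨∫ t in (0 : ℝ)..1, g t,
    (∫ t in (0 : ℝ)..1, g t) - (N : ℝ)⁻¹ * ∑ j ∈ Finset.range N, g (j / N), ?_, ?_, ?_⟩
  · exact hasPrincipalValue_of_eq_odd_add hw_odd hw_per
      (fun t ht ht_lt => (continuousAt_cotKernel ht ht_lt).const_mul c) hg.continuous hx hg_eq
  · rw [← sum_erase_add_eq_sum_of_eq_odd_add hw_odd hw_per hi₀_lt hg_eq, hg_self, mul_add,
      Finset.mul_sum]
    simp only [cotKernel, ← mul_assoc]
    ring
  · refine (abs_integral_sub_sum_le_of_periodic hg hg_le hg_per (by omega)).trans ?_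
    gcongr
    exact le_max_left _ _
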